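/- (Pointwise energy identity for the Lagrangian neo-Hookean system) Let η : ℝ × ℝ³ → ℝ³ be smooth with invertible spatial Jacobian ∇η everywhere, A := (∇η)⁻¹, and ∂_j^η g := ∑_k A_{kj} ∂_k g. Let v : ℝ × ℝ³ → ℝ³, q : ℝ × ℝ³ → ℝ and 𝔽 : ℝ × ℝ³ → ℝ^{3×3} be smooth fields satisfying, at every point: (i) ∂_t v_i = ∑_j ∂_j^η ( (sym^η v)_{ij} − q δ_{ij} + ∑_m 𝔽_{im} 𝔽_{jm} ) for each i; (ii) ∂_t 𝔽_{ij} = ∑_m 𝔽_{mj} ∂_m^η v_i for all i,j; and (iii) ∑_j ∂_j^η v_j = 0, where (sym^η v)_{ij} := ∂_j^η v_i + ∂_i^η v_j and δ_{ij} is the Kronecker delta. Then at every point: ∂_t ( ½|v|² + ½|𝔽|² ) + ½ |sym^η v|² = ∑_{j} ∂_j^η ( ∑_i ( (sym^η v)_{ij} − q δ_{ij} + ∑_m 𝔽_{im} 𝔽_{jm} ) v_i ), where |v|² = ∑_i v_i², |𝔽|² = ∑_{ij} 𝔽_{ij}² and |sym^η v|² = ∑_{ij} ((sym^η v)_{ij})².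 -/

import Mathlib

open scoped Matrix BigOperators

/-- Spatial partial derivative `∂_l f` of a scalar function on `ℝ × ℝ³`. -/
noncomputable def pdx (f : ℝ × (Fin 3 → ℝ) → ℝ) (l : Fin 3) (p : ℝ × (Fin 3 → ℝ)) : ℝ :=
  fderiv ℝ (fun y => f (p.1, y)) p.2 (Pi.single l 1)

/-- Time derivative `∂_t f` of a scalar function on `ℝ × ℝ³`. -/
noncomputable def pdt (f : ℝ × (Fin 3 → ℝ) → ℝ) (p : ℝ × (Fin 3 → ℝ)) : ℝ :=
  deriv (fun s => f (s, p.2)) p.1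

/-- Spatial Jacobian matrix `∇η` with entries `(∇η)_{il} = ∂_l η_i`. -/
noncomputable def Jac (η : ℝ × (Fin 3 → ℝ) → Fin 3 → ℝ) (p : ℝ × (Fin 3 → ℝ)) :
    Matrix (Fin 3) (Fin 3) ℝ :=
  Matrix.of fun i l => pdx (fun q => η q i) l p

/-- Transformed derivative `∂_j^η g = ∑_k A_{kj} ∂_k g`, where `A = (∇η)⁻¹`. -/
noncomputable def Deta (η : ℝ × (Fin 3 → ℝ) → Fin 3 → ℝ) (f : ℝ × (Fin 3 → ℝ) → ℝ)
    (j : Fin 3) (p : ℝ × (Fin 3 → ℝ)) : ℝ :=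
  ∑ k, (Jac η p)⁻¹ k j * pdx f k p

/-- Transformed doubled symmetric gradient `(sym^η v)_{ij} = ∂_j^η v_i + ∂_i^η v_j`. -/
noncomputable def symv (η v : ℝ × (Fin 3 → ℝ) → Fin 3 → ℝ) (i j : Fin 3)
    (p : ℝ × (Fin 3 → ℝ)) : ℝ :=
  Deta η (fun q => v q i) j p + Deta η (fun q => v q j) i p

/-- Stress tensor `(sym^η v)_{ij} − q δ_{ij} + ∑_m 𝔽_{im} 𝔽_{jm}`. -/
noncomputable def stress (η v : ℝ × (Fin 3 → ℝ) → Fin 3 → ℝ)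
    (pr : ℝ × (Fin 3 → ℝ) → ℝ) (F : ℝ × (Fin 3 → ℝ) → Fin 3 → Fin 3 → ℝ)
    (i j : Fin 3) (p : ℝ × (Fin 3 → ℝ)) : ℝ :=
  symv η v i j p - (if i = j then pr p else 0) + ∑ m, F p i m * F p j m

lemma slice_contDiff {E : Type*} [NormedAddCommGroup E] [NormedSpace ℝ E]
    {f : ℝ × (Fin 3 → ℝ) → E} (hf : ContDiff ℝ (⊤ : ℕ∞) f) (t : ℝ) :
    ContDiff ℝ (⊤ : ℕ∞) (fun y => f (t, y)) :=
  hf.comp (contDiff_const.prodMk contDiff_id)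

lemma pdx_slice_diff {f : ℝ × (Fin 3 → ℝ) → ℝ} (hf : ContDiff ℝ (⊤ : ℕ∞) f) (l : Fin 3) (t : ℝ) :
    Differentiable ℝ (fun y => pdx f l (t, y)) := by
  have h1 := slice_contDiff hf t
  have h2 := (contDiff_infty_iff_fderiv.1 h1).2
  have h3 := h2.differentiable (by simp)
  exact fun y => (h3 y).clm_apply (differentiableAt_const _)

lemma Jac_inv_slice_diff {η : ℝ × (Fin 3 → ℝ) → Fin 3 → ℝ} (hη : ContDiff ℝ (⊤ : ℕ∞) η)
    (hinv : ∀ p, IsUnit (Jac η p)) (k j : Fin 3) (t : ℝ) :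
    Differentiable ℝ (fun y => (Jac η (t, y))⁻¹ k j) := by
  have hJ : ∀ i l, Differentiable ℝ (fun y => Jac η (t, y) i l) := fun i l =>
    pdx_slice_diff (f := fun q => η q i) (contDiff_pi.1 hη i) l t
  have hdet : Differentiable ℝ (fun y => (Jac η (t, y)).det) := by
    simp only [Matrix.det_fin_three]
    fun_prop
  have hadj : Differentiable ℝ (fun y => (Jac η (t, y)).adjugate k j) := by
    simp only [Matrix.adjugate_fin_three]
    fin_cases k <;> fin_cases j <;> simp <;> fun_prop
  have hne : ∀ y, (Jac η (t, y)).det ≠ 0 := fun y =>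
    ((Matrix.isUnit_iff_isUnit_det _).1 (hinv (t, y))).ne_zero
  simp only [Matrix.inv_def, Matrix.smul_apply, Ring.inverse_eq_inv', smul_eq_mul]
  exact (hdet.inv hne).mul hadj

lemma Deta_slice_diff {η : ℝ × (Fin 3 → ℝ) → Fin 3 → ℝ} (hη : ContDiff ℝ (⊤ : ℕ∞) η)
    (hinv : ∀ p, IsUnit (Jac η p)) {f : ℝ × (Fin 3 → ℝ) → ℝ} (hf : ContDiff ℝ (⊤ : ℕ∞) f)
    (j : Fin 3) (t : ℝ) :
    Differentiable ℝ (fun y => Deta η f j (t, y)) := by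
  unfold Deta
  exact Differentiable.fun_sum fun k _ =>
    (Jac_inv_slice_diff hη hinv k j t).mul (pdx_slice_diff hf k t)

lemma Deta_sum_mul (η : ℝ × (Fin 3 → ℝ) → Fin 3 → ℝ) (S w : Fin 3 → ℝ × (Fin 3 → ℝ) → ℝ)
    (j : Fin 3) (p : ℝ × (Fin 3 → ℝ))
    (hS : ∀ i, Differentiable ℝ (fun y => S i (p.1, y)))
    (hw : ∀ i, Differentiable ℝ (fun y => w i (p.1, y))) :
    Deta η (fun q => ∑ i, S i q * w i q) j p
      = ∑ i, (Deta η (S i) j p * w i p + S i p * Deta η (w i) j p) := by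
  have hp : ∀ k, pdx (fun q => ∑ i, S i q * w i q) k p
      = ∑ i, (pdx (S i) k p * w i p + S i p * pdx (w i) k p) := by
    intro k
    unfold pdx
    have h := HasFDerivAt.fun_sum (u := Finset.univ) fun i _ =>
      ((hS i p.2).hasFDerivAt.mul (hw i p.2).hasFDerivAt)
    refine (congrArg (fun L => L (Pi.single k 1)) (HasFDerivAt.fderiv h)).trans ?_
    simp only [ContinuousLinearMap.sum_apply, ContinuousLinearMap.add_apply,
      ContinuousLinearMap.smul_apply, smul_eq_mul]
    exact Finset.sum_congr rfl fun i _ => by ring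
  unfold Deta
  simp only [hp]
  simp only [Fin.sum_univ_three]
  ring

/-- Pointwise energy identity for the Lagrangian neo-Hookean system:
`∂_t(½|v|² + ½|𝔽|²) + ½|sym^η v|² = ∑_j ∂_j^η (∑_i stress_{ij} v_i)`. -/
theorem pointwise_energy_identity
    (η v : ℝ × (Fin 3 → ℝ) → Fin 3 → ℝ)
    (pr : ℝ × (Fin 3 → ℝ) → ℝ) (F : ℝ × (Fin 3 → ℝ) → Fin 3 → Fin 3 → ℝ)
    (hη : ContDiff ℝ (⊤ : ℕ∞) η) (hinv : ∀ p, IsUnit (Jac η p))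
    (hv : ContDiff ℝ (⊤ : ℕ∞) v) (hpr : ContDiff ℝ (⊤ : ℕ∞) pr) (hF : ContDiff ℝ (⊤ : ℕ∞) F)
    (hmom : ∀ (p : ℝ × (Fin 3 → ℝ)) (i : Fin 3),
      pdt (fun q => v q i) p = ∑ j, Deta η (stress η v pr F i j) j p)
    (hdef : ∀ (p : ℝ × (Fin 3 → ℝ)) (i j : Fin 3),
      pdt (fun q => F q i j) p = ∑ m, F p m j * Deta η (fun q => v q i) m p)
    (hdiv : ∀ p : ℝ × (Fin 3 → ℝ), ∑ j, Deta η (fun q => v q j) j p = 0)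
    (p : ℝ × (Fin 3 → ℝ)) :
    pdt (fun q => (∑ i, (v q i) ^ 2) / 2 + (∑ i, ∑ j, (F q i j) ^ 2) / 2) p
        + (∑ i, ∑ j, (symv η v i j p) ^ 2) / 2
      = ∑ j, Deta η (fun q => ∑ i, stress η v pr F i j q * v q i) j p := by
  have hvi : ∀ i, ContDiff ℝ (⊤ : ℕ∞) (fun q => v q i) := contDiff_pi.1 hv
  have hFij : ∀ i j, ContDiff ℝ (⊤ : ℕ∞) (fun q => F q i j) := fun i j =>
    contDiff_pi.1 (contDiff_pi.1 hF i) j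
  have hne : ((⊤ : ℕ∞) : WithTop ℕ∞) ≠ 0 := by simp
  have hS : ∀ i j, Differentiable ℝ (fun y => stress η v pr F i j (p.1, y)) := by
    intro i j
    unfold stress symv
    have h1 := Deta_slice_diff hη hinv (hvi i) j p.1
    have h2 := Deta_slice_diff hη hinv (hvi j) i p.1
    have h3 := (slice_contDiff hpr p.1).differentiable hne
    have h4 : ∀ i j, Differentiable ℝ (fun y => F (p.1, y) i j) := fun i j =>
      (slice_contDiff (hFij i j) p.1).differentiable hne
    refine ((h1.add h2).sub ?_).add (Differentiable.fun_sum fun m _ => (h4 i m).mul (h4 j m))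
    by_cases h : i = j
    · simpa [h] using h3
    · simp [h]
  have hR : ∀ j, Deta η (fun q => ∑ i, stress η v pr F i j q * v q i) j p
      = ∑ i, (Deta η (stress η v pr F i j) j p * v p i
          + stress η v pr F i j p * Deta η (fun q => v q i) j p) := fun j =>
    Deta_sum_mul η (fun i => stress η v pr F i j) (fun i q => v q i) j p (fun i => hS i j)
      (fun i => (slice_contDiff (hvi i) p.1).differentiable hne)
  have ht : ∀ f : ℝ × (Fin 3 → ℝ) → ℝ, ContDiff ℝ (⊤ : ℕ∞) f →
      HasDerivAt (fun s => f (s, p.2)) (pdt f p) p.1 := by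
    intro f hf
    have : ContDiff ℝ (⊤ : ℕ∞) (fun s => f (s, p.2)) :=
      hf.comp (contDiff_id.prodMk contDiff_const)
    exact (this.differentiable hne p.1).hasDerivAt
  have hL : pdt (fun q => (∑ i, (v q i) ^ 2) / 2 + (∑ i, ∑ j, (F q i j) ^ 2) / 2) p
      = ∑ i, v p i * pdt (fun q => v q i) p
        + ∑ i, ∑ j, F p i j * pdt (fun q => F q i j) p := by
    have h1 := (HasDerivAt.fun_sum (u := Finset.univ) fun i _ =>
      (ht _ (hvi i)).pow 2).div_const 2
    have h2 := (HasDerivAt.fun_sum (u := Finset.univ) fun i _ =>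
      HasDerivAt.fun_sum (u := Finset.univ) fun j _ => (ht _ (hFij i j)).pow 2).div_const 2
    refine (h1.add h2).deriv.trans ?_
    simp only [Fin.sum_univ_three]
    push_cast
    ring
  rw [hL]
  simp only [hR, hmom, hdef]
  have hd := hdiv p
  simp only [stress, symv]
  have e : ∀ i j, Deta η (fun q => stress η v pr F i j q) j p = Deta η (stress η v pr F i j) j p :=
    fun _ _ => rfl
  generalize hT : (fun i j => Deta η (stress η v pr F i j) j p) = T
  have hT' : ∀ i j, Deta η (stress η v pr F i j) j p = T i j := fun i j => by rw [← hT]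
  generalize hD : (fun i j => Deta η (fun q => v q i) j p) = D at *
  have hD' : ∀ i j, Deta η (fun q => v q i) j p = D i j := fun i j => by rw [← hD]
  simp only [hT', hD'] at hd ⊢
  simp only [Fin.sum_univ_three] at hd ⊢
  simp
  linear_combination (pr p) * hd
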